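/- Topological completeness of S4DT1S for T₁ spaces: for every bimodal formula A, A ∈ S4DT1S if and only if A is valid in every dense-in-itself T₁ topological space. -/

import Mathlib

/-!
Each axiom is evaluated in the neighbourhood filters of a space: (DS) and (AT₁) hold in a space
exactly when it has no isolated point and when its points are closed, which gives soundness.

For completeness, the canonical frame of S4DT1S is an S4D-frame, a T₁-frame and a DS-frame, and
passing to a class of the equivalence relation `R_D ∪ Id` preserves truth and makes any two distinct
points `R_D`-related. Such a frame is the image of a dense-in-itself T₁ space under a cd-p-morphism:
replace every `R_D`-reflexive point by infinitely many copies, and let a set `U` be open when for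
each point of `U` over `w` and each `v` with `R w v`, it contains almost all points over `v`.
Removing a point from the space leaves almost all points of each fibre, so singletons are closed. An
irreflexive point has a one-point fibre but is `R`-minimal, so an open set still meets the fibre of
every `R`-successor of each of its points, and the DS-condition keeps an irreflexive point from
being isolated.

Over an infinite frame, the closure condition on single fibres makes a cd-p-morphism open with
respect to the Alexandrov topology, but it need not be continuous. Continuity of the projection is
what transfers the truth of `□` from the frame to the space.
-/

/-- Bimodal formulas: propositional letters, falsum, implication, box, and
the difference modality `[≠]` (called `dbox` here). -/
inductive BForm : Type
  | var : ℕ → BForm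
  | bot : BForm
  | imp : BForm → BForm → BForm
  | box : BForm → BForm
  | dbox : BForm → BForm
  deriving DecidableEq

namespace BForm

/-- Classical negation. -/
def neg (A : BForm) : BForm := imp A bot

/-- Classical conjunction. -/
def conj (A B : BForm) : BForm := neg (imp A (neg B))

/-- `◇A = ¬□¬A`. -/
def dia (A : BForm) : BForm := neg (box (neg A))

/-- `⟨≠⟩A = ¬[≠]¬A`. -/
def ddia (A : BForm) : BForm := neg (dbox (neg A))

end BForm

/-- Truth at a point of a Kripke model over a frame `(W, R, R_D)`. -/
def ksat {W : Type} (R RD : W → W → Prop) (θ : ℕ → Set W) : W → BForm → Prop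
  | x, .var n => x ∈ θ n
  | _, .bot => False
  | x, .imp A B => ksat R RD θ x A → ksat R RD θ x B
  | x, .box A => ∀ y, R x y → ksat R RD θ y A
  | x, .dbox A => ∀ y, RD x y → ksat R RD θ y A

/-- Validity in a Kripke frame: truth at every point under every valuation. -/
def kvalid {W : Type} (R RD : W → W → Prop) (A : BForm) : Prop :=
  ∀ (θ : ℕ → Set W) (x : W), ksat R RD θ x A

/-- Truth at a point of a topological model. -/
def tsat {X : Type} [TopologicalSpace X] (θ : ℕ → Set X) : X → BForm → Prop
  | x, .var n => x ∈ θ n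
  | _, .bot => False
  | x, .imp A B => tsat θ x A → tsat θ x B
  | x, .box A => ∃ U : Set X, IsOpen U ∧ x ∈ U ∧ ∀ y ∈ U, tsat θ y A
  | x, .dbox A => ∀ y, y ≠ x → tsat θ y A

/-- Validity in a topological space. -/
def tvalid (X : Type) [TopologicalSpace X] (A : BForm) : Prop :=
  ∀ (θ : ℕ → Set X) (x : X), tsat θ x A

/-- Uniform substitution of formulas for propositional letters. -/
def substF (σ : ℕ → BForm) : BForm → BForm
  | .var n => σ n
  | .bot => .bot
  | .imp A B => .imp (substF σ A) (substF σ B)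
  | .box A => .box (substF σ A)
  | .dbox A => .dbox (substF σ A)

/-- Boolean evaluation of a formula, treating letters and modal formulas as atoms. -/
def beval (v : BForm → Bool) : BForm → Bool
  | .var n => v (.var n)
  | .bot => false
  | .imp A B => !(beval v A) || beval v B
  | .box A => v (.box A)
  | .dbox A => v (.dbox A)

/-- A classical tautology of the bimodal language. -/
def Tautology (A : BForm) : Prop := ∀ v : BForm → Bool, beval v A = true

/-- The letter `p`. -/
def pLet : BForm := .var 0
/-- The letter `q`. -/
def qLet : BForm := .var 1

/-- The least bimodal logic containing `K₂`, the S4D axioms and the extra axioms `Ax`,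
closed under modus ponens, uniform substitution, and both necessitation rules. -/
inductive Logic (Ax : Set BForm) : BForm → Prop
  | taut {A : BForm} : Tautology A → Logic Ax A
  | axKBox : Logic Ax (.imp (.box (.imp pLet qLet)) (.imp (.box pLet) (.box qLet)))
  | axKD : Logic Ax (.imp (.dbox (.imp pLet qLet)) (.imp (.dbox pLet) (.dbox qLet)))
  | axBD : Logic Ax (.imp pLet (.dbox (BForm.ddia pLet)))
  | ax4mD : Logic Ax (.imp (BForm.conj pLet (.dbox pLet)) (.dbox (.dbox pLet)))
  | axTBox : Logic Ax (.imp (.box pLet) pLet)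
  | ax4Box : Logic Ax (.imp (.box pLet) (.box (.box pLet)))
  | axDBox : Logic Ax (.imp (BForm.conj (.dbox pLet) pLet) (.box pLet))
  | extra {A : BForm} : A ∈ Ax → Logic Ax A
  | mp {A B : BForm} : Logic Ax (.imp A B) → Logic Ax A → Logic Ax B
  | subst {A : BForm} (σ : ℕ → BForm) : Logic Ax A → Logic Ax (substF σ A)
  | necBox {A : BForm} : Logic Ax A → Logic Ax (.box A)
  | necD {A : BForm} : Logic Ax A → Logic Ax (.dbox A)

/-- The axiom (DS): `[≠]p → ◇p`. -/
def dsAx : BForm := .imp (.dbox pLet) (BForm.dia pLet)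

/-- The axiom (AT₁): `[≠]p → [≠]□p`. -/
def at1Ax : BForm := .imp (.dbox pLet) (.dbox (.box pLet))

/-- The logic S4D. -/
def S4D : BForm → Prop := Logic ∅

/-- The logic S4DS = S4D + (DS). -/
def S4DS : BForm → Prop := Logic {dsAx}

/-- The logic S4DT1S = S4DS + (AT₁). -/
def S4DT1S : BForm → Prop := Logic {dsAx, at1Ax}

/-- `(W, R, R_D)` is an S4D-frame: `R` is reflexive and transitive, `R_D` is
symmetric and pseudo-transitive, and `R ⊆ R_D ∪ Id`. -/
structure IsS4DFrame {W : Type} (R RD : W → W → Prop) : Prop where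
  refl : ∀ x, R x x
  trans : ∀ ⦃x y z⦄, R x y → R y z → R x z
  symm : ∀ ⦃x y⦄, RD x y → RD y x
  ptrans : ∀ ⦃x y z⦄, RD x y → RD y z → x ≠ z → RD x z
  inc : ∀ ⦃x y⦄, R x y → RD x y ∨ x = y

/-- A T₁-frame: every `R_D`-irreflexive point is `R`-minimal. -/
def IsT1Frame {W : Type} (R RD : W → W → Prop) : Prop :=
  ∀ x, ¬ RD x x → ∀ y, R y x → y = x

/-- A DS-frame: every `R_D`-irreflexive point has an `R`-successor distinct from itself. -/
def IsDSFrame {W : Type} (R RD : W → W → Prop) : Prop :=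
  ∀ x, ¬ RD x x → ∃ y, y ≠ x ∧ R x y

/-- A cd-p-morphism from a topological space `X` onto a Kripke frame `(W, R, R_D)`. -/
structure IsCdPMorphism {X : Type} [TopologicalSpace X] {W : Type}
    (R RD : W → W → Prop) (f : X → W) : Prop where
  surj : Function.Surjective f
  cl : ∀ w : W, closure (f ⁻¹' {w}) = f ⁻¹' {v | R v w}
  diff : ∀ w : W, {x : X | ∃ y, y ≠ x ∧ f y = w} = f ⁻¹' {v | RD v w}

/-- A p-morphism between Kripke frames. -/
structure IsPMorphism {W W' : Type} (R RD : W → W → Prop) (R' RD' : W' → W' → Prop)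
    (f : W → W') : Prop where
  surj : Function.Surjective f
  forth : ∀ ⦃x y⦄, R x y → R' (f x) (f y)
  forthD : ∀ ⦃x y⦄, RD x y → RD' (f x) (f y)
  back : ∀ x z, R' (f x) z → ∃ y, R x y ∧ f y = z
  backD : ∀ x z, RD' (f x) z → ∃ y, RD x y ∧ f y = z

/-- The Alexandrov topology on `W` whose open sets are the `R`-upward-closed sets. -/
def alexandrov {W : Type} (R : W → W → Prop) : TopologicalSpace W where
  IsOpen U := ∀ ⦃x⦄, x ∈ U → ∀ ⦃y⦄, R x y → y ∈ U
  isOpen_univ := fun _ _ _ _ => trivial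
  isOpen_inter := fun _ _ hU hV x hx y hxy => ⟨hU hx.1 hxy, hV hx.2 hxy⟩
  isOpen_sUnion := fun _ hS x hx y hxy => by
    obtain ⟨U, hU, hxU⟩ := hx
    exact ⟨U, hU, hS U hU hxU hxy⟩

open Filter Topology Relation

/-! ### Propositional reasoning -/

theorem beval_imp_eq_true {v : BForm → Bool} {A B : BForm} :
    beval v (A.imp B) = true ↔ (beval v A = true → beval v B = true) := by
  cases hA : beval v A <;> simp [beval, hA]

theorem beval_bot_ne_true {v : BForm → Bool} : beval v .bot ≠ true := Bool.false_ne_true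

/-- A maximal consistent set of formulas of classical propositional logic with the letters and the
modal formulas as atoms, encoded by the condition that membership respects `⊥` and `→`. -/
structure IsMaximalTheory (T : Set BForm) : Prop where
  bot_notMem : BForm.bot ∉ T
  imp_mem_iff : ∀ {A B : BForm}, A.imp B ∈ T ↔ (A ∈ T → B ∈ T)

open Classical in
theorem IsMaximalTheory.beval_decide_mem {T : Set BForm} (hT : IsMaximalTheory T) (A : BForm) :
    beval (fun B => decide (B ∈ T)) A = true ↔ A ∈ T := by
  induction A with
  | bot => exact iff_of_false beval_bot_ne_true hT.bot_notMem
  | imp A B ihA ihB => rw [beval_imp_eq_true, ihA, ihB, hT.imp_mem_iff]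
  | var n => exact decide_eq_true_iff
  | box A => exact decide_eq_true_iff
  | dbox A => exact decide_eq_true_iff

open Classical in
theorem IsMaximalTheory.mem_of_tautology {T : Set BForm} (hT : IsMaximalTheory T) {A : BForm}
    (hA : Tautology A) : A ∈ T :=
  (hT.beval_decide_mem A).1 (hA _)

/-! ### Topological soundness -/

section TopologicalSemantics

variable {X : Type} [TopologicalSpace X] {θ : ℕ → Set X} {x : X} {A B : BForm}

theorem tsat_neg : tsat θ x A.neg ↔ ¬ tsat θ x A := Iff.rfl

theorem tsat_conj : tsat θ x (A.conj B) ↔ tsat θ x A ∧ tsat θ x B := by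
  simp only [BForm.conj, BForm.neg, tsat, imp_false, Classical.not_imp, not_not]

theorem tsat_dbox : tsat θ x A.dbox ↔ ∀ y, y ≠ x → tsat θ y A := Iff.rfl

theorem tsat_box : tsat θ x A.box ↔ ∀ᶠ y in 𝓝 x, tsat θ y A := by
  rw [eventually_nhds_iff]
  exact exists_congr fun U => ⟨fun ⟨hU, hx, h⟩ => ⟨h, hU, hx⟩, fun ⟨h, hU, hx⟩ => ⟨hU, hx, h⟩⟩

theorem tsat_dia : tsat θ x A.dia ↔ ∃ᶠ y in 𝓝 x, tsat θ y A := by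
  rw [BForm.dia, tsat_neg, tsat_box]
  exact Iff.rfl

theorem tsat_substF (σ : ℕ → BForm) :
    tsat θ x (substF σ A) ↔ tsat (fun n => {y | tsat θ y (σ n)}) x A := by
  induction A generalizing x with
  | var n => rfl
  | bot => rfl
  | imp A B ihA ihB => simp only [substF, tsat, ihA, ihB]
  | box A ih => simp only [substF, tsat, ih]
  | dbox A ih => simp only [substF, tsat, ih]

theorem isMaximalTheory_setOf_tsat (θ : ℕ → Set X) (x : X) : IsMaximalTheory {A | tsat θ x A} where
  bot_notMem h := h
  imp_mem_iff := Iff.rfl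

theorem tvalid_dsAx_iff : tvalid X dsAx ↔ ∀ x : X, ¬ IsOpen ({x} : Set X) := by
  constructor
  · intro h x hx
    have hdia : tsat (fun _ => {x}ᶜ) x (BForm.dia pLet) := h _ x fun _ hy => hy
    obtain ⟨y, hyx, hy⟩ := ((tsat_dia.1 hdia).and_eventually (hx.mem_nhds rfl)).exists
    exact hyx hy
  · intro h θ x hp
    rw [tsat_dia]
    by_contra hdia
    have hx : ∀ᶠ y in 𝓝 x, y = x :=
      (not_frequently.1 hdia).mono fun y hy => not_imp_comm.1 (hp y) hy
    refine h x (isOpen_iff_eventually.2 ?_)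
    rintro _ rfl
    exact hx

theorem tvalid_at1Ax_iff : tvalid X at1Ax ↔ ∀ x : X, IsClosed ({x} : Set X) := by
  constructor
  · intro h x
    refine isOpen_compl_iff.1 (isOpen_iff_eventually.2 fun y hy => ?_)
    have hdbox : tsat (fun _ => {x}ᶜ) x pLet.box.dbox := h _ x fun _ hz => hz
    exact tsat_box.1 (hdbox y hy)
  · intro h θ x hp y hy
    exact tsat_box.2 (((h x).isOpen_compl.eventually_mem hy).mono hp)

theorem Logic.tvalid {Ax : Set BForm} (hAx : ∀ B ∈ Ax, tvalid X B) (h : Logic Ax A) :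
    tvalid X A := by
  induction h with
  | taut h => exact fun θ x => (isMaximalTheory_setOf_tsat θ x).mem_of_tautology h
  | axKBox =>
    intro θ x hpq hp
    exact tsat_box.2 ((tsat_box.1 hpq).mp (tsat_box.1 hp |>.mono fun _ hy h => h hy))
  | axKD => exact fun θ x hpq hp y hy => hpq y hy (hp y hy)
  | axBD => exact fun θ x hp y hy hnp => hnp x hy.symm hp
  | ax4mD =>
    intro θ x h y _ z _
    obtain ⟨hp, hdp⟩ := tsat_conj.1 h
    exact (eq_or_ne z x).elim (fun hzx => hzx ▸ hp) (hdp z)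
  | axTBox => exact fun θ x hp => (tsat_box.1 hp).self_of_nhds
  | ax4Box =>
    intro θ x hp
    simp only [tsat_box, eventually_eventually_nhds] at hp ⊢
    exact hp
  | axDBox =>
    intro θ x h
    obtain ⟨hdp, hp⟩ := tsat_conj.1 h
    refine tsat_box.2 (.of_forall fun y => ?_)
    exact (eq_or_ne y x).elim (fun hyx => hyx ▸ hp) (hdp y)
  | extra h => exact hAx _ h
  | mp _ _ ihAB ihA => exact fun θ x => ihAB θ x (ihA θ x)
  | subst σ _ ih => exact fun θ x => (tsat_substF σ).2 (ih _ x)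
  | necBox _ ih => exact fun θ x => tsat_box.2 (.of_forall (ih θ))
  | necD _ ih => exact fun θ x y _ => ih θ y

end TopologicalSemantics

/-! ### Lindenbaum's lemma -/

/-- A propositional theory: a set of formulas containing the classical tautologies and closed under
modus ponens. Membership of the modal axioms is imposed separately, where it is needed. -/
structure IsTheory (T : Set BForm) : Prop where
  taut : ∀ {A : BForm}, Tautology A → A ∈ T
  mp : ∀ {A B : BForm}, A.imp B ∈ T → A ∈ T → B ∈ T

namespace IsTheory

variable {T : Set BForm} {A B : BForm}

theorem imp_mem_of_mem (hT : IsTheory T) (hB : B ∈ T) : A.imp B ∈ T := by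
  refine hT.mp (hT.taut (A := B.imp (A.imp B)) fun v => ?_) hB
  simp only [beval_imp_eq_true]
  exact fun hB _ => hB

theorem imp_self_mem (hT : IsTheory T) : A.imp A ∈ T :=
  hT.taut fun _ => beval_imp_eq_true.2 id

theorem bot_imp_mem (hT : IsTheory T) : BForm.bot.imp A ∈ T :=
  hT.taut fun _ => beval_imp_eq_true.2 fun h => absurd h beval_bot_ne_true

theorem mem_of_imp_mem_of_imp_imp_mem {C : BForm} (hT : IsTheory T) (hB : B.imp A ∈ T)
    (hBC : (B.imp C).imp A ∈ T) : A ∈ T := by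
  refine hT.mp (hT.mp (hT.taut (A := (B.imp A).imp (((B.imp C).imp A).imp A)) fun v => ?_) hB) hBC
  simp only [beval_imp_eq_true]
  tauto

theorem setOf_imp_mem (hT : IsTheory T) (B : BForm) : IsTheory {A | B.imp A ∈ T} where
  taut hA := hT.imp_mem_of_mem (hT.taut hA)
  mp {A C} hAC hA := by
    refine hT.mp (hT.mp (hT.taut
      (A := (B.imp (A.imp C)).imp ((B.imp A).imp (B.imp C))) fun v => ?_) hAC) hA
    simp only [beval_imp_eq_true]
    exact fun hBAC hBA hB => hBAC hB (hBA hB)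

theorem sUnion {c : Set (Set BForm)} (hc : ∀ S ∈ c, IsTheory S) (hne : c.Nonempty)
    (hdir : DirectedOn (· ⊆ ·) c) : IsTheory (⋃₀ c) where
  taut hA := hne.elim fun S hS => ⟨S, hS, (hc S hS).taut hA⟩
  mp := by
    rintro A B ⟨S, hS, hAB⟩ ⟨S', hS', hA⟩
    obtain ⟨S'', hS'', hSS'', hS'S''⟩ := hdir S hS S' hS'
    exact ⟨S'', hS'', (hc S'' hS'').mp (hSS'' hAB) (hS'S'' hA)⟩

theorem exists_maximal_notMem (hT : IsTheory T) (hA : A ∉ T) :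
    ∃ M, T ⊆ M ∧ Maximal (fun S => IsTheory S ∧ A ∉ S) M := by
  refine zorn_subset_nonempty {S | IsTheory S ∧ A ∉ S} (fun c hc hchain hne => ?_) T ⟨hT, hA⟩
  refine ⟨⋃₀ c, ⟨sUnion (fun S hS => (hc hS).1) hne hchain.directedOn, ?_⟩,
    fun S hS => Set.subset_sUnion_of_mem hS⟩
  rintro ⟨S, hS, hAS⟩
  exact (hc hS).2 hAS

theorem isMaximalTheory_of_maximal {M : Set BForm}
    (hM : Maximal (fun S => IsTheory S ∧ A ∉ S) M) : IsMaximalTheory M := by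
  obtain ⟨hMT, hAM⟩ := hM.prop
  have imp_mem_of_notMem : ∀ B, B ∉ M → B.imp A ∈ M := by
    intro B hB
    by_contra hBA
    exact hB (hM.le_of_ge ⟨hMT.setOf_imp_mem B, hBA⟩ (fun _ => hMT.imp_mem_of_mem)
      hMT.imp_self_mem)
  refine
    { bot_notMem := fun hbot => hAM (hMT.mp hMT.bot_imp_mem hbot)
      imp_mem_iff := @fun B C => ⟨hMT.mp, fun hBC => ?_⟩ }
  by_cases hB : B ∈ M
  · exact hMT.imp_mem_of_mem (hBC hB)
  · by_contra hBC'
    exact hAM (hMT.mem_of_imp_mem_of_imp_imp_mem (imp_mem_of_notMem B hB)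
      (imp_mem_of_notMem _ hBC'))

theorem exists_isMaximalTheory (hT : IsTheory T) (hA : A ∉ T) :
    ∃ M, IsMaximalTheory M ∧ T ⊆ M ∧ A ∉ M := by
  obtain ⟨M, hTM, hM⟩ := hT.exists_maximal_notMem hA
  exact ⟨M, isMaximalTheory_of_maximal hM, hTM, hM.prop.2⟩

end IsTheory

/-! ### The canonical frame -/

section CanonicalFrame

variable {Ax : Set BForm}

theorem isTheory_setOf_logic (Ax : Set BForm) : IsTheory {A | Logic Ax A} where
  taut := .taut
  mp := .mp

/-- The operator `op` is a normal modality of `Logic Ax`. This treats `□` and `[≠]` uniformly. -/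
structure IsNormalModality (Ax : Set BForm) (op : BForm → BForm) : Prop where
  nec : ∀ {A : BForm}, Logic Ax A → Logic Ax (op A)
  imp_distrib : ∀ A B : BForm, Logic Ax ((op (A.imp B)).imp ((op A).imp (op B)))

theorem isNormalModality_box (Ax : Set BForm) : IsNormalModality Ax BForm.box where
  nec := .necBox
  imp_distrib A B := Logic.axKBox.subst fun n => if n = 0 then A else B

theorem isNormalModality_dbox (Ax : Set BForm) : IsNormalModality Ax BForm.dbox where
  nec := .necD
  imp_distrib A B := Logic.axKD.subst fun n => if n = 0 then A else B

/-- A point of the canonical frame of `Logic Ax`: a maximal consistent set of formulas containing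
`Logic Ax`. -/
structure CanonicalPoint (Ax : Set BForm) where
  carrier : Set BForm
  isMaximalTheory : IsMaximalTheory carrier
  logic_subset : {A | Logic Ax A} ⊆ carrier

namespace CanonicalPoint

instance : SetLike (CanonicalPoint Ax) BForm where
  coe := carrier
  coe_injective := by
    rintro ⟨_, _, _⟩ ⟨_, _, _⟩ rfl
    rfl

variable {x y : CanonicalPoint Ax} {A B : BForm}

theorem bot_notMem : BForm.bot ∉ x := x.isMaximalTheory.bot_notMem

theorem imp_mem_iff : A.imp B ∈ x ↔ (A ∈ x → B ∈ x) := x.isMaximalTheory.imp_mem_iff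

theorem neg_mem_iff : A.neg ∈ x ↔ A ∉ x :=
  imp_mem_iff.trans (imp_congr_right fun _ => iff_of_false bot_notMem id)

theorem conj_mem_iff : A.conj B ∈ x ↔ A ∈ x ∧ B ∈ x := by
  simp only [BForm.conj, neg_mem_iff, imp_mem_iff, Classical.not_imp, not_not]

theorem mem_of_logic_imp (h : Logic Ax (A.imp B)) (hA : A ∈ x) : B ∈ x :=
  imp_mem_iff.1 (x.logic_subset h) hA

theorem exists_notMem (hA : ¬ Logic Ax A) : ∃ x : CanonicalPoint Ax, A ∉ x := by
  obtain ⟨M, hM, hAxM, hAM⟩ := (isTheory_setOf_logic Ax).exists_isMaximalTheory hA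
  exact ⟨⟨M, hM, hAxM⟩, hAM⟩

theorem exists_mem_notMem_of_ne (hne : x ≠ y) : ∃ A ∈ x, A ∉ y := by
  contrapose! hne
  refine SetLike.ext fun A => ⟨hne A, fun hAy => ?_⟩
  by_contra hAx
  exact neg_mem_iff.1 (hne _ (neg_mem_iff.2 hAx)) hAy

end CanonicalPoint

open CanonicalPoint

/-- The accessibility relation of the modality `op` in the canonical frame of `Logic Ax`. -/
def canonicalRel (Ax : Set BForm) (op : BForm → BForm) (x y : CanonicalPoint Ax) : Prop :=
  ∀ A, op A ∈ x → A ∈ y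

variable {x y : CanonicalPoint Ax} {A : BForm}

theorem IsNormalModality.isTheory_setOf_mem {op : BForm → BForm} (hop : IsNormalModality Ax op)
    (x : CanonicalPoint Ax) : IsTheory {A | op A ∈ x} where
  taut hA := x.logic_subset (hop.nec (.taut hA))
  mp {A B} hAB hA := imp_mem_iff.1 (mem_of_logic_imp (hop.imp_distrib A B) hAB) hA

theorem IsNormalModality.mem_iff {op : BForm → BForm} (hop : IsNormalModality Ax op) :
    op A ∈ x ↔ ∀ y, canonicalRel Ax op x y → A ∈ y := by
  refine ⟨fun hA y hxy => hxy A hA, fun h => ?_⟩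
  by_contra hA
  obtain ⟨M, hM, hxM, hAM⟩ := (hop.isTheory_setOf_mem x).exists_isMaximalTheory hA
  exact hAM (h ⟨M, hM, fun B hB => hxM (x.logic_subset (hop.nec hB))⟩ fun B hB => hxM hB)

theorem box_mem_iff : A.box ∈ x ↔ ∀ y, canonicalRel Ax BForm.box x y → A ∈ y :=
  (isNormalModality_box Ax).mem_iff

theorem dbox_mem_iff : A.dbox ∈ x ↔ ∀ y, canonicalRel Ax BForm.dbox x y → A ∈ y :=
  (isNormalModality_dbox Ax).mem_iff

theorem ksat_canonicalRel_iff : ksat (canonicalRel Ax BForm.box) (canonicalRel Ax BForm.dbox)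
    (fun n => {y | BForm.var n ∈ y}) x A ↔ A ∈ x := by
  induction A generalizing x with
  | var n => rfl
  | bot => exact iff_of_false id bot_notMem
  | imp A B ihA ihB => rw [imp_mem_iff, ksat, ihA, ihB]
  | box A ih => simp only [box_mem_iff, ksat, ih]
  | dbox A ih => simp only [dbox_mem_iff, ksat, ih]

theorem logic_of_kvalid_canonicalRel
    (h : kvalid (canonicalRel Ax BForm.box) (canonicalRel Ax BForm.dbox) A) : Logic Ax A := by
  by_contra hA
  obtain ⟨x, hx⟩ := exists_notMem hA
  exact hx (ksat_canonicalRel_iff.1 (h _ x))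

theorem exists_mem_dbox_mem_notMem_of_not_canonicalRel (hne : x ≠ y)
    (hxy : ¬ canonicalRel Ax BForm.dbox x y) : ∃ B, B ∈ x ∧ B.dbox ∈ x ∧ B ∉ y := by
  obtain ⟨A, hAx, hAy⟩ : ∃ A, A.dbox ∈ x ∧ A ∉ y := by simpa [canonicalRel] using hxy
  obtain ⟨D, hDx, hDy⟩ := exists_mem_notMem_of_ne hne
  -- `D ∨ A` holds at `x` because of `D`, and at the `R_D`-successors of `x` because of `A`.
  refine ⟨D.neg.imp A, ?_, dbox_mem_iff.2 fun z hxz => ?_, ?_⟩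
  · exact imp_mem_iff.2 fun hD => absurd hDx (neg_mem_iff.1 hD)
  · exact imp_mem_iff.2 fun _ => hxz A hAx
  · exact fun hB => hAy (imp_mem_iff.1 hB (neg_mem_iff.2 hDy))

theorem canonicalRel_dbox_symm (hxy : canonicalRel Ax BForm.dbox x y) :
    canonicalRel Ax BForm.dbox y x := by
  intro A hAy
  by_contra hAx
  have hddia : A.neg.ddia ∈ y :=
    hxy _ (mem_of_logic_imp (Logic.axBD.subst fun _ => A.neg) (neg_mem_iff.2 hAx))
  refine neg_mem_iff.1 hddia (dbox_mem_iff.2 fun z hyz => ?_)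
  rw [neg_mem_iff, neg_mem_iff, not_not]
  exact hyz A hAy

theorem isS4DFrame_canonicalRel (Ax : Set BForm) :
    IsS4DFrame (canonicalRel Ax BForm.box) (canonicalRel Ax BForm.dbox) where
  refl x A := mem_of_logic_imp (Logic.axTBox.subst fun _ => A)
  trans x y z hxy hyz A hA :=
    hyz A (hxy _ (mem_of_logic_imp (Logic.ax4Box.subst fun _ => A) hA))
  symm _ _ := canonicalRel_dbox_symm
  ptrans x y z hxy hyz hne := by
    by_contra hxz
    obtain ⟨B, hB, hdB, hBz⟩ := exists_mem_dbox_mem_notMem_of_not_canonicalRel hne hxz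
    have hddB : B.dbox.dbox ∈ x :=
      mem_of_logic_imp (Logic.ax4mD.subst fun _ => B) (conj_mem_iff.2 ⟨hB, hdB⟩)
    exact hBz (hyz B (hxy _ hddB))
  inc x y hxy := by
    by_contra! h
    obtain ⟨B, hB, hdB, hBy⟩ := exists_mem_dbox_mem_notMem_of_not_canonicalRel h.2 h.1
    exact hBy (hxy B (mem_of_logic_imp (Logic.axDBox.subst fun _ => B) (conj_mem_iff.2 ⟨hdB, hB⟩)))

theorem isT1Frame_canonicalRel (h : Logic Ax at1Ax) :
    IsT1Frame (canonicalRel Ax BForm.box) (canonicalRel Ax BForm.dbox) := by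
  intro x hx y hyx
  refine ((isS4DFrame_canonicalRel Ax).inc hyx).resolve_left fun hdyx => hx fun A hA => ?_
  have hdboxbox : A.box.dbox ∈ x := mem_of_logic_imp (h.subst fun _ => A) hA
  exact hyx A (canonicalRel_dbox_symm hdyx _ hdboxbox)

theorem isDSFrame_canonicalRel (h : Logic Ax dsAx) :
    IsDSFrame (canonicalRel Ax BForm.box) (canonicalRel Ax BForm.dbox) := by
  intro x hx
  obtain ⟨A, hdA, hA⟩ : ∃ A, A.dbox ∈ x ∧ A ∉ x := by simpa [canonicalRel] using hx
  have hdia : A.dia ∈ x := mem_of_logic_imp (h.subst fun _ => A) hdA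
  obtain ⟨y, hxy, hAy⟩ : ∃ y, canonicalRel Ax BForm.box x y ∧ A ∈ y := by
    simpa [BForm.dia, neg_mem_iff, box_mem_iff] using hdia
  exact ⟨y, fun hyx => hA (hyx ▸ hAy), hxy⟩

end CanonicalFrame

/-! ### Generated subframes -/

section GeneratedSubframe

variable {W : Type} {R RD : W → W → Prop}

theorem ksat_subrel_iff {p : W → Prop} (hR : ∀ ⦃x y⦄, p x → R x y → p y)
    (hRD : ∀ ⦃x y⦄, p x → RD x y → p y) {θ : ℕ → Set W} {x : Subtype p} {A : BForm} :
    ksat (Subrel R p) (Subrel RD p) (fun n => Subtype.val ⁻¹' θ n) x A ↔ ksat R RD θ x A := by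
  induction A generalizing x with
  | var n => rfl
  | bot => rfl
  | imp A B ihA ihB => simp only [ksat, ihA, ihB]
  | box A ih =>
    simp only [ksat, ih]
    exact ⟨fun h y hxy => h ⟨y, hR x.2 hxy⟩ hxy, fun h y hxy => h y hxy⟩
  | dbox A ih =>
    simp only [ksat, ih]
    exact ⟨fun h y hxy => h ⟨y, hRD x.2 hxy⟩ hxy, fun h y hxy => h y hxy⟩

theorem IsS4DFrame.subrel (hF : IsS4DFrame R RD) (p : W → Prop) :
    IsS4DFrame (Subrel R p) (Subrel RD p) where
  refl x := hF.refl x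
  trans _ _ _ hxy hyz := hF.trans hxy hyz
  symm _ _ hxy := hF.symm hxy
  ptrans _ _ _ hxy hyz hne := hF.ptrans hxy hyz (Subtype.coe_ne_coe.2 hne)
  inc _ _ hxy := (hF.inc hxy).imp_right Subtype.ext

theorem IsT1Frame.subrel (hT1 : IsT1Frame R RD) (p : W → Prop) :
    IsT1Frame (Subrel R p) (Subrel RD p) :=
  fun x hx y hyx => Subtype.ext (hT1 x hx y hyx)

theorem IsDSFrame.subrel (hDS : IsDSFrame R RD) {p : W → Prop}
    (hR : ∀ ⦃x y⦄, p x → R x y → p y) : IsDSFrame (Subrel R p) (Subrel RD p) := by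
  intro x hx
  obtain ⟨y, hne, hxy⟩ := hDS x hx
  exact ⟨⟨y, hR x.2 hxy⟩, fun h => hne (congrArg Subtype.val h), hxy⟩

namespace IsS4DFrame

variable {x y z : W}

theorem reflGen_trans (hF : IsS4DFrame R RD) (hxy : ReflGen RD x y) (hyz : ReflGen RD y z) :
    ReflGen RD x z := by
  rcases hxy with _ | hxy
  · exact hyz
  rcases hyz with _ | hyz
  · exact .single hxy
  rcases eq_or_ne x z with rfl | hne
  · exact .refl
  · exact .single (hF.ptrans hxy hyz hne)

theorem reflGen_of_rel (hF : IsS4DFrame R RD) (hxy : R x y) : ReflGen RD x y :=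
  (hF.inc hxy).elim .single fun h => h ▸ .refl

theorem pairwise_subrel_reflGen (hF : IsS4DFrame R RD) (r : W) :
    Pairwise (Subrel RD (ReflGen RD r)) := by
  intro x y hne
  have hxr : ReflGen RD x r := x.2.casesOn .refl fun h => .single (hF.symm h)
  exact ((reflGen_iff _ _ _).1 (hF.reflGen_trans hxr y.2)).resolve_left
    fun h => hne (Subtype.ext h.symm)

theorem kvalid_of_forall_subrel_reflGen (hF : IsS4DFrame R RD) {A : BForm}
    (h : ∀ r, kvalid (Subrel R (ReflGen RD r)) (Subrel RD (ReflGen RD r)) A) :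
    kvalid R RD A := fun _ r =>
  (ksat_subrel_iff (fun _ _ hx hxy => hF.reflGen_trans hx (hF.reflGen_of_rel hxy))
    (fun _ _ hx hxy => hF.reflGen_trans hx (.single hxy))).1 (h r _ ⟨r, .refl⟩)

end IsS4DFrame

theorem S4DT1S.of_forall_kvalid {A : BForm}
    (h : ∀ (W : Type) (R RD : W → W → Prop), IsS4DFrame R RD → IsT1Frame R RD →
      IsDSFrame R RD → Pairwise RD → kvalid R RD A) : S4DT1S A := by
  have hF := isS4DFrame_canonicalRel {dsAx, at1Ax}
  refine logic_of_kvalid_canonicalRel (hF.kvalid_of_forall_subrel_reflGen fun r => ?_)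
  refine h _ _ _ (hF.subrel _) ((isT1Frame_canonicalRel (.extra (by simp))).subrel _)
    ((isDSFrame_canonicalRel (.extra (by simp))).subrel fun x y hx hxy => ?_)
    (hF.pairwise_subrel_reflGen r)
  exact hF.reflGen_trans hx (hF.reflGen_of_rel hxy)

end GeneratedSubframe

/-! ### cd-p-morphisms -/

namespace IsCdPMorphism

variable {X : Type} [TopologicalSpace X] {W : Type} {R RD : W → W → Prop} {f : X → W} {x : X}

theorem mem_closure_fibre_iff (hf : IsCdPMorphism R RD f) {w : W} :
    x ∈ closure (f ⁻¹' {w}) ↔ R (f x) w := by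
  rw [hf.cl]
  rfl

theorem refl (hf : IsCdPMorphism R RD f) (w : W) : R w w := by
  obtain ⟨x, rfl⟩ := hf.surj w
  exact hf.mem_closure_fibre_iff.1 (subset_closure rfl)

theorem trans (hf : IsCdPMorphism R RD f) {u v w : W} (huv : R u v) (hvw : R v w) : R u w := by
  obtain ⟨x, rfl⟩ := hf.surj u
  have hsub : f ⁻¹' {v} ⊆ closure (f ⁻¹' {w}) := by
    rintro y rfl
    exact hf.mem_closure_fibre_iff.2 hvw
  exact hf.mem_closure_fibre_iff.1
    (closure_minimal hsub isClosed_closure (hf.mem_closure_fibre_iff.2 huv))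

theorem exists_ne_and_eq_iff (hf : IsCdPMorphism R RD f) {w : W} :
    (∃ y, y ≠ x ∧ f y = w) ↔ RD (f x) w :=
  Set.ext_iff.1 (hf.diff w) x

theorem eventually_rel (hf : IsCdPMorphism R RD f) (hcont : Continuous[_, alexandrov R] f) (x : X) :
    ∀ᶠ y in 𝓝 x, R (f x) (f y) := by
  let := alexandrov R
  have hopen : IsOpen {w | R (f x) w} := fun _ hv _ hvw => hf.trans hv hvw
  exact (hopen.preimage hcont).mem_nhds (hf.refl (f x))

theorem tsat_iff_ksat (hf : IsCdPMorphism R RD f) (hcont : Continuous[_, alexandrov R] f)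
    {θ : ℕ → Set W} {A : BForm} : tsat (fun n => f ⁻¹' θ n) x A ↔ ksat R RD θ (f x) A := by
  induction A generalizing x with
  | var n => rfl
  | bot => rfl
  | imp A B ihA ihB => simp only [tsat, ksat, ihA, ihB]
  | box A ih =>
    simp only [tsat_box, ksat, ih]
    refine ⟨fun h w hw => ?_, fun h => (hf.eventually_rel hcont x).mono fun y => h (f y)⟩
    have hfreq := mem_closure_iff_frequently.1 (hf.mem_closure_fibre_iff.2 hw)
    obtain ⟨y, rfl, hy⟩ := (hfreq.and_eventually h).exists
    exact hy
  | dbox A ih =>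
    simp only [tsat_dbox, ksat, ih]
    refine ⟨fun h w hw => ?_, fun h y hyx => h _ (hf.exists_ne_and_eq_iff.1 ⟨y, hyx, rfl⟩)⟩
    obtain ⟨y, hyx, rfl⟩ := hf.exists_ne_and_eq_iff.2 hw
    exact h y hyx

theorem kvalid_of_tvalid (hf : IsCdPMorphism R RD f) (hcont : Continuous[_, alexandrov R] f)
    {A : BForm} (h : tvalid X A) : kvalid R RD A := by
  intro θ w
  obtain ⟨x, rfl⟩ := hf.surj w
  exact (hf.tsat_iff_ksat hcont).1 (h _ x)

end IsCdPMorphism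

/-! ### A T₁ space over a frame -/

/-- The points of a space over the frame `(W, R, RD)` in which every `RD`-reflexive point of `W` is
replaced by a copy of `ℕ` and every irreflexive point is kept. The parameter `R` serves only to
determine the topology. -/
@[ext]
structure Blowup {W : Type} (R RD : W → W → Prop) where
  proj : W
  index : ℕ
  index_eq_zero : ¬ RD proj proj → index = 0

namespace Blowup

variable {W : Type} {R RD : W → W → Prop} {x y : Blowup R RD} {w : W}

instance : TopologicalSpace (Blowup R RD) where
  IsOpen U := ∀ x ∈ U, ∀ w, R x.proj w → (proj ⁻¹' {w} \ U).Finite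
  isOpen_univ x _ w _ := by simp
  isOpen_inter U V hU hV x hx w hw := by
    rw [Set.sdiff_inter]
    exact (hU x hx.1 w hw).union (hV x hx.2 w hw)
  isOpen_sUnion S hS := by
    rintro x ⟨U, hU, hxU⟩ w hw
    exact (hS U hU x hxU w hw).subset (Set.sdiff_subset_sdiff_right (Set.subset_sUnion_of_mem hU))

theorem isOpen_iff {U : Set (Blowup R RD)} :
    IsOpen U ↔ ∀ x ∈ U, ∀ w, R x.proj w → (proj ⁻¹' {w} \ U).Finite := Iff.rfl

theorem proj_surjective : Function.Surjective (proj : Blowup R RD → W) :=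
  fun w => ⟨⟨w, 0, fun _ => rfl⟩, rfl⟩

theorem infinite_fibre (hw : RD w w) : (proj ⁻¹' {w} : Set (Blowup R RD)).Infinite :=
  Set.infinite_of_injective_forall_mem (f := fun n => ⟨w, n, fun h => absurd hw h⟩)
    (fun _ _ h => congrArg index h) fun _ => rfl

theorem eq_of_proj_eq (h : x.proj = y.proj) (hy : ¬ RD y.proj y.proj) : x = y :=
  Blowup.ext h ((x.index_eq_zero (h ▸ hy)).trans (y.index_eq_zero hy).symm)

theorem exists_mem_fibre (hT1 : IsT1Frame R RD) {U : Set (Blowup R RD)} (hU : IsOpen U)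
    (hx : x ∈ U) (hw : R x.proj w) : ∃ y ∈ U, y.proj = w := by
  by_cases hww : RD w w
  · obtain ⟨y, hy, hyU⟩ := (infinite_fibre hww).exists_notMem_finite (isOpen_iff.1 hU x hx w hw)
    exact ⟨y, not_not.1 fun h => hyU ⟨hy, h⟩, hy⟩
  · exact ⟨x, hx, hT1 w hww _ hw⟩

theorem isClosed_singleton (x : Blowup R RD) : IsClosed {x} := by
  refine isOpen_compl_iff.1 (isOpen_iff.2 fun _ _ w _ => (Set.finite_singleton x).subset ?_)
  rw [Set.sdiff_compl]
  exact Set.inter_subset_right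

theorem not_isOpen_singleton (hrefl : ∀ w, R w w) (hT1 : IsT1Frame R RD) (hDS : IsDSFrame R RD)
    (x : Blowup R RD) : ¬ IsOpen {x} := by
  intro hx
  by_cases hxx : RD x.proj x.proj
  · exact (infinite_fibre hxx).sdiff (Set.finite_singleton x) (isOpen_iff.1 hx x rfl _ (hrefl _))
  · obtain ⟨w, hne, hw⟩ := hDS _ hxx
    obtain ⟨y, rfl, rfl⟩ := exists_mem_fibre hT1 hx rfl hw
    exact hne rfl

theorem continuous_proj : Continuous[_, alexandrov R] (proj : Blowup R RD → W) := by
  let := alexandrov R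
  refine ⟨fun S hS => isOpen_iff.2 fun x hx w hw => ?_⟩
  have hwS : proj ⁻¹' {w} ⊆ (proj ⁻¹' S : Set (Blowup R RD)) :=
    Set.preimage_mono (Set.singleton_subset_iff.2 (hS hx hw))
  rw [Set.sdiff_eq_empty.2 hwS]
  exact Set.finite_empty

theorem closure_fibre (hrefl : ∀ w, R w w) (htrans : ∀ ⦃u v w⦄, R u v → R v w → R u w)
    (hT1 : IsT1Frame R RD) (w : W) :
    closure (proj ⁻¹' {w} : Set (Blowup R RD)) = proj ⁻¹' {v | R v w} := by
  let := alexandrov R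
  have hclosed : IsClosed {v | R v w} :=
    isOpen_compl_iff.1 fun u hu v huv hvw => hu (htrans huv hvw)
  refine (closure_minimal ?_ (hclosed.preimage continuous_proj)).antisymm fun x hx => ?_
  · exact Set.preimage_mono (Set.singleton_subset_iff.2 (hrefl w))
  · exact mem_closure_iff.2 fun U hU hxU => exists_mem_fibre hT1 hU hxU hx

theorem exists_ne_and_proj_eq_iff (hRD : Pairwise RD) :
    (∃ y, y ≠ x ∧ y.proj = w) ↔ RD x.proj w := by
  rcases eq_or_ne x.proj w with rfl | hne
  · refine ⟨fun ⟨y, hyx, h⟩ => not_not.1 fun hx => hyx (eq_of_proj_eq h hx), fun h => ?_⟩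
    obtain ⟨y, hy, hyx⟩ := (infinite_fibre h).exists_notMem_finite (Set.finite_singleton x)
    exact ⟨y, hyx, hy⟩
  · obtain ⟨y, rfl⟩ := proj_surjective (R := R) (RD := RD) w
    exact iff_of_true ⟨y, fun h => hne (congrArg proj h.symm), rfl⟩ (hRD hne)

theorem isCdPMorphism_proj (hrefl : ∀ w, R w w) (htrans : ∀ ⦃u v w⦄, R u v → R v w → R u w)
    (hT1 : IsT1Frame R RD) (hRD : Pairwise RD) :
    IsCdPMorphism R RD (proj : Blowup R RD → W) where
  surj := proj_surjective
  cl := closure_fibre hrefl htrans hT1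
  diff _ := Set.ext fun _ => exists_ne_and_proj_eq_iff hRD

end Blowup

/-- topological completeness of S4DT1S: `A ∈ S4DT1S` iff `A` is valid
in every dense-in-itself T₁ topological space. -/
theorem s4dt1s_topological_completeness (A : BForm) :
    S4DT1S A ↔ ∀ (X : Type) [TopologicalSpace X],
      (∀ x : X, IsClosed ({x} : Set X)) → (∀ x : X, ¬ IsOpen ({x} : Set X)) →
      tvalid X A := by
  constructor
  · intro h X _ hclosed hdense
    refine h.tvalid ?_
    rintro B (rfl | rfl)
    · exact tvalid_dsAx_iff.2 hdense
    · exact tvalid_at1Ax_iff.2 hclosed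
  · intro h
    refine S4DT1S.of_forall_kvalid fun W R RD hF hT1 hDS hRD => ?_
    have hproj := Blowup.isCdPMorphism_proj hF.refl hF.trans hT1 hRD
    exact hproj.kvalid_of_tvalid Blowup.continuous_proj
      (h (Blowup R RD) Blowup.isClosed_singleton (Blowup.not_isOpen_singleton hF.refl hT1 hDS))
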